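/- arXiv:2302.05946 — 2 statements merged into one kernel-verified Lean document; each statement's English description precedes it below -/
import Mathlib

section
/- Assume the number-field distortion setup. If Σ_{j=1}^J min{ M_j^{(1)}, M_j^{(2)}/(4δ_j(1−δ_j)) } < 1, where for indices j with δ_j = 0 the second term in the minimum is interpreted as +∞ (so the minimum equals M_j^{(1)}), then A does not cover O_K, i.e. ⋃_{i=1}^n (a_i + I_i) ≠ O_K. -/
/-!
A distortion step redistributes mass only inside the fibres of `π_{j-1}`, so it preserves the
integral of every function that is constant on them. Every `I_i` with `P_min(I_i) = p_j` contains
`Q_j`, because the prime powers missing from `Q_j` are coprime to `I_i`. Hence `𝓑_j` is a union of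
fibres of `π_j`, and its mass no longer changes after step `j`. In step `j` a fibre of density `α`
keeps in `𝓑_j` the proportion `max 0 ((α - δ_j) / (1 - δ_j))` of its mass. This is at most `α` and,
since `(α - 2δ_j)² ≥ 0`, at most `α² / (4δ_j(1 - δ_j))`; so the final mass of `𝓑_j` is bounded by
the `j`-th term of the sum. If these terms add up to less than the total mass, some class avoids
every `𝓑_j`, and it is not covered because each `P_min(I_i)` divides `Q` and hence is one of the
`p_j`.
-/

set_option maxHeartbeats 1000000
set_option synthInstance.maxHeartbeats 1000000

open scoped Classical
open NumberField

/-- `p` is the unique prime ideal factor of `I` of largest norm. -/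
def IsPmin {K : Type*} [Field K] [NumberField K] (I p : Ideal (𝓞 K)) : Prop :=
  p.IsPrime ∧ p ∣ I ∧ ∀ q : Ideal (𝓞 K), q.IsPrime → q ∣ I → q ≠ p →
    Ideal.absNorm q < Ideal.absNorm p

/-- A nonzero proper ideal is distinguishable if it has a unique prime factor of largest norm. -/
def Distinguishable {K : Type*} [Field K] [NumberField K] (I : Ideal (𝓞 K)) : Prop :=
  I ≠ ⊥ ∧ I ≠ ⊤ ∧ ∃ p : Ideal (𝓞 K), IsPmin I p

/-! ### Densities on the classes of an equivalence relation -/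

lemma le_ker_map₂ {X β γ ε : Type*} {r : Setoid X} {f : X → β} {g : X → γ} (φ : β → γ → ε)
    (hf : r ≤ Setoid.ker f) (hg : r ≤ Setoid.ker g) : r ≤ Setoid.ker fun x => φ (f x) (g x) :=
  fun _ _ h => congrArg₂ φ (hf h) (hg h)

lemma sum_biUnion_le {X κ M : Type*} [AddCommMonoid M] [PartialOrder M] [IsOrderedAddMonoid M]
    {t : Finset κ} {B : κ → Finset X} {f : X → M} (hf : ∀ x, 0 ≤ f x) :
    ∑ x ∈ t.biUnion B, f x ≤ ∑ k ∈ t, ∑ x ∈ B k, f x := by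
  rw [← Finset.sup_eq_biUnion]
  refine Finset.apply_sup_le_sum (f := fun S : Finset X => ∑ x ∈ S, f x) Finset.sum_empty ?_ t
  intro S T
  rw [Finset.sup_eq_union, ← Finset.sum_union_inter]
  exact le_add_of_nonneg_right (Finset.sum_nonneg fun x _ => hf x)

section Density

variable {X : Type*} [Fintype X] {r : Setoid X} {B : Finset X} {x y : X}

/-- The equivalence class of `x` as a finite set; the fibre `F_j(x)` when `r` is the kernel
of `π_j`. -/
noncomputable def fibre (r : Setoid X) (x : X) : Finset X :=
  Finset.univ.filter fun y => r y x

/-- The proportion of the class of `x` that lies in `B`: the function `α_j` of the distortion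
method. -/
noncomputable def fibreDensity (r : Setoid X) (B : Finset X) (x : X) : ℝ :=
  ((fibre r x ∩ B).card : ℝ) / ((fibre r x).card : ℝ)

lemma mem_fibre : y ∈ fibre r x ↔ r y x := by
  simp [fibre]

lemma self_mem_fibre (r : Setoid X) (x : X) : x ∈ fibre r x :=
  mem_fibre.2 (r.refl x)

lemma card_fibre_pos (r : Setoid X) (x : X) : 0 < ((fibre r x).card : ℝ) :=
  Nat.cast_pos.2 (Finset.card_pos.2 ⟨x, self_mem_fibre r x⟩)

lemma fibre_eq_of_rel (h : r x y) : fibre r x = fibre r y := by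
  ext z
  rw [mem_fibre, mem_fibre]
  exact ⟨fun hz => r.trans hz h, fun hz => r.trans hz (r.symm h)⟩

lemma le_ker_fibreDensity (r : Setoid X) (B : Finset X) : r ≤ Setoid.ker (fibreDensity r B) :=
  fun x y h => show fibreDensity r B x = fibreDensity r B y by
    rw [fibreDensity, fibreDensity, fibre_eq_of_rel h]

lemma fibreDensity_nonneg (r : Setoid X) (B : Finset X) (x : X) : 0 ≤ fibreDensity r B x := by
  unfold fibreDensity; positivity

lemma fibreDensity_le_one (r : Setoid X) (B : Finset X) (x : X) : fibreDensity r B x ≤ 1 :=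
  div_le_one_of_le₀ (Nat.cast_le.2 (Finset.card_le_card Finset.inter_subset_left))
    (Nat.cast_nonneg _)

lemma fibreDensity_pos (hx : x ∈ B) : 0 < fibreDensity r B x :=
  div_pos (Nat.cast_pos.2 (Finset.card_pos.2 ⟨x, Finset.mem_inter.2 ⟨self_mem_fibre r x, hx⟩⟩))
    (card_fibre_pos r x)

lemma sum_mem_eq_sum_fibreDensity_mul {w : X → ℝ} (hw : r ≤ Setoid.ker w) :
    ∑ x ∈ B, w x = ∑ x, fibreDensity r B x * w x :=
  calc ∑ y ∈ B, w y = ∑ y ∈ B, ∑ x ∈ fibre r y, w x / (fibre r x).card := by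
        refine Finset.sum_congr rfl fun y _ => ?_
        have hconst : ∀ x ∈ fibre r y, w x / (fibre r x).card = w y / (fibre r y).card := by
          intro x hx
          have hxy := mem_fibre.1 hx
          rw [fibre_eq_of_rel hxy, show w x = w y from hw hxy]
        rw [Finset.sum_congr rfl hconst, Finset.sum_const, nsmul_eq_mul,
          mul_div_cancel₀ _ (card_fibre_pos r y).ne']
    _ = ∑ x, ∑ _y ∈ fibre r x ∩ B, w x / (fibre r x).card :=
        Finset.sum_comm' fun y x => by
          simp only [Finset.mem_inter, mem_fibre, Finset.mem_univ, true_and,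
            show r x y ↔ r y x from r.comm', and_comm]
    _ = ∑ x, fibreDensity r B x * w x := by
        refine Finset.sum_congr rfl fun x _ => ?_
        rw [Finset.sum_const, nsmul_eq_mul, fibreDensity]
        ring

lemma sum_ite_mem_eq_sum_fibreDensity {u v : X → ℝ} (hu : r ≤ Setoid.ker u)
    (hv : r ≤ Setoid.ker v) :
    ∑ x, (if x ∈ B then u x else v x) =
      ∑ x, (fibreDensity r B x * u x + (1 - fibreDensity r B x) * v x) := by
  calc ∑ x, (if x ∈ B then u x else v x)
      = ∑ x, ((if x ∈ B then u x - v x else 0) + v x) :=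
        Finset.sum_congr rfl fun x _ => by split_ifs <;> ring
    _ = ∑ x ∈ B, (u x - v x) + ∑ x, v x := by
        rw [Finset.sum_add_distrib, Finset.sum_ite_mem, Finset.univ_inter]
    _ = ∑ x, (fibreDensity r B x * u x + (1 - fibreDensity r B x) * v x) := by
        rw [sum_mem_eq_sum_fibreDensity_mul (le_ker_map₂ (· - ·) hu hv), ← Finset.sum_add_distrib]
        exact Finset.sum_congr rfl fun x _ => by ring

end Density

/-! ### One distortion step -/

lemma max_sub_div_le_sq_div {α δ : ℝ} (hδ₀ : 0 < δ) (hδ₁ : δ < 1) :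
    max 0 (α - δ) / (1 - δ) ≤ α ^ 2 / (4 * δ * (1 - δ)) := by
  rw [← div_div]
  refine div_le_div_of_nonneg_right ?_ (sub_pos.2 hδ₁).le
  refine max_le (by positivity) ((le_div_iff₀ (by positivity)).2 ?_)
  linarith [sq_nonneg (α - 2 * δ)]

lemma max_sub_div_le_self {α δ : ℝ} (hα₀ : 0 ≤ α) (hα₁ : α ≤ 1) (hδ₀ : 0 ≤ δ) (hδ₁ : δ < 1) :
    max 0 (α - δ) / (1 - δ) ≤ α := by
  rw [div_le_iff₀ (sub_pos.2 hδ₁)]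
  refine max_le (mul_nonneg hα₀ (sub_pos.2 hδ₁).le) ?_
  linarith [mul_le_of_le_one_left hδ₀ hα₁]

lemma mul_max_sub_div_mul {α δ : ℝ} (hα : 0 ≤ α) (hδ : 0 ≤ δ) :
    α * (max 0 (α - δ) / (α * (1 - δ))) = max 0 (α - δ) / (1 - δ) := by
  rcases hα.eq_or_lt with rfl | h
  · simp [hδ]
  · rw [← mul_div_assoc, mul_div_mul_left _ _ h.ne']

lemma max_sub_div_add_mul_inv_one_sub_min {α δ : ℝ} (hδ : δ < 1) :
    max 0 (α - δ) / (1 - δ) + (1 - α) * (1 - min α δ)⁻¹ = 1 := by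
  rcases lt_or_ge α δ with h | h
  · rw [max_eq_left (by linarith), min_eq_left h.le, zero_div, zero_add,
      mul_inv_cancel₀ (by linarith)]
  · rw [max_eq_right (by linarith), min_eq_right h, ← div_eq_mul_inv, ← add_div,
      sub_add_sub_cancel', div_self (by linarith)]

section Step

variable {X : Type*} {α : X → ℝ} {B : Finset X} {δ : ℝ} {P : X → ℝ} {x : X}

/-- The density `P_j` obtained from `P = P_{j-1}` by one step of the distortion method with removed
set `B = 𝓑_j`, fibre densities `α = α_j` and threshold `δ = δ_j`. The case `α x = 0` is separate
because the last formula would then be a division by `0`. -/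
noncomputable def distort (α : X → ℝ) (B : Finset X) (δ : ℝ) (P : X → ℝ) (x : X) : ℝ :=
  if α x < δ then (if x ∈ B then 0 else P x / (1 - α x))
  else if α x = 0 then P x
  else P x * (α x - (if x ∈ B then δ else 0)) / (α x * (1 - δ))

/-- The term `min {M_j^{(1)}, M_j^{(2)} / (4 δ_j (1 - δ_j))}` of the distortion method, which
is `M_j^{(1)}` when `δ_j = 0`. -/
noncomputable def momentBound [Fintype X] (α : X → ℝ) (δ : ℝ) (P : X → ℝ) : ℝ :=
  if δ = 0 then ∑ x, α x * P x
  else min (∑ x, α x * P x) ((∑ x, (α x) ^ 2 * P x) / (4 * δ * (1 - δ)))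

lemma distort_of_mem (hx : x ∈ B) (hα : 0 < α x) :
    distort α B δ P x = P x * (max 0 (α x - δ) / (α x * (1 - δ))) := by
  rcases lt_or_ge (α x) δ with h | h
  · rw [distort, if_pos h, if_pos hx, max_eq_left (by linarith), zero_div, mul_zero]
  · rw [distort, if_neg h.not_gt, if_neg hα.ne', if_pos hx, max_eq_right (by linarith),
      mul_div_assoc]

lemma distort_of_notMem (hx : x ∉ B) (hα : 0 ≤ α x) (hδ : 0 ≤ δ) :
    distort α B δ P x = P x * (1 - min (α x) δ)⁻¹ := by
  rcases lt_or_ge (α x) δ with h | h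
  · rw [distort, if_pos h, if_neg hx, min_eq_left h.le, div_eq_mul_inv]
  rw [distort, if_neg h.not_gt, if_neg hx, min_eq_right h]
  rcases hα.eq_or_lt with h0 | h0
  · rw [if_pos h0.symm, show δ = 0 by linarith, sub_zero, inv_one, mul_one]
  · rw [if_neg h0.ne', sub_zero, mul_comm (P x), mul_div_mul_left _ _ h0.ne', div_eq_mul_inv]

lemma distort_nonneg (hα : 0 ≤ α x) (hδ : δ < 1) (hP : 0 ≤ P x) : 0 ≤ distort α B δ P x := by
  unfold distort
  split_ifs
  · rfl
  · exact div_nonneg hP (by linarith)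
  · exact hP
  all_goals exact div_nonneg (mul_nonneg hP (by linarith)) (mul_nonneg hα (by linarith))

lemma le_ker_distort {s : Setoid X} (hα : s ≤ Setoid.ker α) (hB : s ≤ Setoid.ker (· ∈ B))
    (hP : s ≤ Setoid.ker P) : s ≤ Setoid.ker (distort α B δ P) := by
  intro x y h
  have hmem : (x ∈ B) = (y ∈ B) := hB h
  change distort α B δ P x = distort α B δ P y
  simp only [distort, show α x = α y from hα h, show P x = P y from hP h, hmem]

end Step

section StepMass

variable {X : Type*} [Fintype X] {r : Setoid X} {B : Finset X} {δ : ℝ} {P : X → ℝ}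

lemma sum_mul_distort (hδ₀ : 0 ≤ δ) (hδ₁ : δ < 1) (hP : r ≤ Setoid.ker P) {g : X → ℝ}
    (hg : r ≤ Setoid.ker g) :
    ∑ x, g x * distort (fibreDensity r B) B δ P x = ∑ x, g x * P x := by
  set α := fibreDensity r B
  have hα : r ≤ Setoid.ker α := le_ker_fibreDensity r B
  have hgP : r ≤ Setoid.ker fun x => g x * P x := le_ker_map₂ (· * ·) hg hP
  let inside (t : ℝ) : ℝ := max 0 (t - δ) / (t * (1 - δ))
  let outside (t : ℝ) : ℝ := (1 - min t δ)⁻¹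
  calc ∑ x, g x * distort α B δ P x
      = ∑ x, if x ∈ B then g x * P x * inside (α x) else g x * P x * outside (α x) := by
        refine Finset.sum_congr rfl fun x _ => ?_
        split_ifs with hx
        · rw [distort_of_mem hx (fibreDensity_pos hx), mul_assoc]
        · rw [distort_of_notMem hx (fibreDensity_nonneg r B x) hδ₀, mul_assoc]
    _ = ∑ x, (α x * (g x * P x * inside (α x)) + (1 - α x) * (g x * P x * outside (α x))) :=
        sum_ite_mem_eq_sum_fibreDensity (le_ker_map₂ (fun m t => m * inside t) hgP hα)
          (le_ker_map₂ (fun m t => m * outside t) hgP hα)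
    _ = ∑ x, g x * P x := by
        refine Finset.sum_congr rfl fun x _ => ?_
        rw [mul_left_comm, mul_left_comm (1 - α x), ← mul_add,
          mul_max_sub_div_mul (fibreDensity_nonneg r B x) hδ₀,
          max_sub_div_add_mul_inv_one_sub_min hδ₁, mul_one]

lemma sum_mem_distort (hδ₀ : 0 ≤ δ) (hP : r ≤ Setoid.ker P) :
    ∑ x ∈ B, distort (fibreDensity r B) B δ P x =
      ∑ x, max 0 (fibreDensity r B x - δ) / (1 - δ) * P x := by
  set α := fibreDensity r B
  calc ∑ x ∈ B, distort α B δ P x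
      = ∑ x ∈ B, P x * (max 0 (α x - δ) / (α x * (1 - δ))) :=
        Finset.sum_congr rfl fun x hx => distort_of_mem hx (fibreDensity_pos hx)
    _ = ∑ x, α x * (P x * (max 0 (α x - δ) / (α x * (1 - δ)))) :=
        sum_mem_eq_sum_fibreDensity_mul
          (le_ker_map₂ (fun m t => m * (max 0 (t - δ) / (t * (1 - δ)))) hP
            (le_ker_fibreDensity r B))
    _ = ∑ x, max 0 (α x - δ) / (1 - δ) * P x := by
        refine Finset.sum_congr rfl fun x _ => ?_
        rw [mul_left_comm, mul_max_sub_div_mul (fibreDensity_nonneg r B x) hδ₀, mul_comm]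

lemma sum_mem_distort_le_momentBound (hδ₀ : 0 ≤ δ) (hδ₁ : δ < 1) (hP : r ≤ Setoid.ker P)
    (hP₀ : ∀ x, 0 ≤ P x) :
    ∑ x ∈ B, distort (fibreDensity r B) B δ P x ≤ momentBound (fibreDensity r B) δ P := by
  rw [sum_mem_distort hδ₀ hP, momentBound]
  have hfirst : ∑ x, max 0 (fibreDensity r B x - δ) / (1 - δ) * P x ≤
      ∑ x, fibreDensity r B x * P x :=
    Finset.sum_le_sum fun x _ => mul_le_mul_of_nonneg_right
      (max_sub_div_le_self (fibreDensity_nonneg r B x) (fibreDensity_le_one r B x) hδ₀ hδ₁) (hP₀ x)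
  split_ifs with hδ
  · exact hfirst
  · refine le_min hfirst ?_
    rw [Finset.sum_div]
    refine Finset.sum_le_sum fun x _ => ?_
    rw [mul_div_right_comm]
    exact mul_le_mul_of_nonneg_right
      (max_sub_div_le_sq_div (hδ₀.lt_of_ne' hδ) hδ₁) (hP₀ x)

end StepMass

/-! ### Iterated distortion -/

/-- Densities `P 0, …, P J` produced by the distortion method along the fibres of finer and finer
projections `r 0, r 1, …`. Indices are shifted: the step from `P j` to `P (j + 1)` removes `B j`
with threshold `δ j`, which are `𝓑_{j+1}` and `δ_{j+1}` in the usual notation. The initial density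
may be any nonnegative function that is constant on the classes of `r 0`. -/
structure IsDistortionProcess {X : Type*} [Fintype X] (J : ℕ) (r : ℕ → Setoid X)
    (B : ℕ → Finset X) (δ : ℕ → ℝ) (P : ℕ → X → ℝ) : Prop where
  antitone : Antitone r
  le_ker_mem : ∀ j < J, r (j + 1) ≤ Setoid.ker (· ∈ B j)
  threshold_mem : ∀ j < J, δ j ∈ Set.Ico (0 : ℝ) 1
  le_ker_zero : r 0 ≤ Setoid.ker (P 0)
  zero_nonneg : ∀ x, 0 ≤ P 0 x
  succ : ∀ j < J, P (j + 1) = distort (fibreDensity (r j) (B j)) (B j) (δ j) (P j)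

namespace IsDistortionProcess

variable {X : Type*} [Fintype X] {J : ℕ} {r : ℕ → Setoid X} {B : ℕ → Finset X} {δ : ℕ → ℝ}
  {P : ℕ → X → ℝ}

lemma nonneg (h : IsDistortionProcess J r B δ P) {j : ℕ} (hj : j ≤ J) (x : X) : 0 ≤ P j x := by
  induction j with
  | zero => exact h.zero_nonneg x
  | succ j ih =>
    rw [h.succ j hj]
    exact distort_nonneg (fibreDensity_nonneg _ _ x) (h.threshold_mem j hj).2 (ih (by omega))

lemma le_ker (h : IsDistortionProcess J r B δ P) {j : ℕ} (hj : j ≤ J) :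
    r j ≤ Setoid.ker (P j) := by
  induction j with
  | zero => exact h.le_ker_zero
  | succ j ih =>
    have hr : r (j + 1) ≤ r j := h.antitone j.le_succ
    rw [h.succ j hj]
    exact le_ker_distort (hr.trans (le_ker_fibreDensity _ _)) (h.le_ker_mem j hj)
      (hr.trans (ih (by omega)))

lemma sum_mul_eq (h : IsDistortionProcess J r B δ P) {i j : ℕ} (hij : i ≤ j) (hj : j ≤ J)
    {g : X → ℝ} (hg : r i ≤ Setoid.ker g) : ∑ x, g x * P j x = ∑ x, g x * P i x := by
  induction j, hij using Nat.le_induction with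
  | base => rfl
  | succ j hij ih =>
    obtain ⟨hδ₀, hδ₁⟩ := h.threshold_mem j hj
    rw [← ih (by omega), h.succ j hj]
    exact sum_mul_distort hδ₀ hδ₁ (h.le_ker (by omega)) ((h.antitone hij).trans hg)

lemma sum_eq (h : IsDistortionProcess J r B δ P) : ∑ x, P J x = ∑ x, P 0 x := by
  simpa only [one_mul] using h.sum_mul_eq (g := fun _ => 1) J.zero_le le_rfl fun _ _ _ => rfl

lemma sum_mem_le_momentBound (h : IsDistortionProcess J r B δ P) {j : ℕ} (hj : j < J) :
    ∑ x ∈ B j, P J x ≤ momentBound (fibreDensity (r j) (B j)) (δ j) (P j) := by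
  obtain ⟨hδ₀, hδ₁⟩ := h.threshold_mem j hj
  have hfrozen : ∑ x ∈ B j, P J x = ∑ x ∈ B j, P (j + 1) x := by
    have hg : r (j + 1) ≤ Setoid.ker fun x => if x ∈ B j then (1 : ℝ) else 0 :=
      fun x y hxy => if_congr (iff_of_eq (h.le_ker_mem j hj hxy)) rfl rfl
    simpa only [ite_mul, one_mul, zero_mul, Finset.sum_ite_mem, Finset.univ_inter] using
      h.sum_mul_eq hj le_rfl hg
  rw [hfrozen, h.succ j hj]
  exact sum_mem_distort_le_momentBound hδ₀ hδ₁ (h.le_ker hj.le) (h.nonneg hj.le)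

lemma exists_forall_notMem (h : IsDistortionProcess J r B δ P)
    (hsum : ∑ j ∈ Finset.range J, momentBound (fibreDensity (r j) (B j)) (δ j) (P j) <
      ∑ x, P 0 x) :
    ∃ x, ∀ j < J, x ∉ B j := by
  by_contra! hcover
  have hunion : (Finset.range J).biUnion B = Finset.univ :=
    Finset.eq_univ_of_forall fun x => by simpa using hcover x
  refine hsum.not_ge ?_
  calc ∑ x, P 0 x = ∑ x ∈ (Finset.range J).biUnion B, P J x := by rw [hunion, h.sum_eq]
    _ ≤ ∑ j ∈ Finset.range J, ∑ x ∈ B j, P J x := by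
        exact sum_biUnion_le (h.nonneg le_rfl)
    _ ≤ _ := Finset.sum_le_sum fun j hj => h.sum_mem_le_momentBound (Finset.mem_range.1 hj)

end IsDistortionProcess

/-! ### Ideals and their dominant primes -/

section Ideals

variable {R : Type*} [CommRing R]

/-- Congruence modulo `I` on `R ⧸ Q`; for `I = Q_j` its classes are the fibres of the projection
`π_j`. -/
def congrMod (Q I : Ideal R) : Setoid (R ⧸ Q) :=
  Setoid.ker (Ideal.Quotient.mk (I.map (Ideal.Quotient.mk Q)))

/-- The abstract form of `P_min(I) = q`: among the primes containing `I`, the prime `q` is the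
unique one of largest weight `N`. -/
def IsDominantPrime {β : Type*} [Preorder β] (N : Ideal R → β) (I q : Ideal R) : Prop :=
  q.IsPrime ∧ I ≤ q ∧ ∀ q' : Ideal R, q'.IsPrime → I ≤ q' → q' ≠ q → N q' < N q

lemma congrMod_iff {Q I : Ideal R} {x y : R ⧸ Q} :
    congrMod Q I x y ↔ x - y ∈ I.map (Ideal.Quotient.mk Q) :=
  Ideal.Quotient.eq

lemma congrMod_mono (Q : Ideal R) : Monotone (congrMod Q) := fun _ _ h _ _ hxy =>
  congrMod_iff.2 (Ideal.map_mono h (congrMod_iff.1 hxy))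

lemma sub_mem_map_iff_of_congrMod {Q I I' : Ideal R} (h : I ≤ I') {x y : R ⧸ Q}
    (hxy : congrMod Q I x y) (c : R ⧸ Q) :
    x - c ∈ I'.map (Ideal.Quotient.mk Q) ↔ y - c ∈ I'.map (Ideal.Quotient.mk Q) := by
  rw [← sub_add_sub_cancel x y c]
  exact Submodule.add_mem_iff_right _ (Ideal.map_mono h (congrMod_iff.1 hxy))

lemma congrMod_le_ker_exists_sub_mem {ι : Type*} {Q I : Ideal R} {D : ι → Prop}
    {I' : ι → Ideal R} (h : ∀ i, D i → I ≤ I' i) (c : ι → R ⧸ Q) :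
    congrMod Q I ≤
      Setoid.ker fun x => ∃ i, D i ∧ x - c i ∈ (I' i).map (Ideal.Quotient.mk Q) :=
  fun _ _ hxy => propext <| exists_congr fun i => and_congr_right fun hi =>
    sub_mem_map_iff_of_congrMod (h i hi) hxy (c i)

lemma antitone_prod_Icc {κ : Type*} [Preorder κ] [LocallyFiniteOrder κ] (a : κ)
    (I : κ → Ideal R) : Antitone fun b => ∏ k ∈ Finset.Icc a b, I k := fun _ _ h =>
  Ideal.le_of_dvd (Finset.prod_dvd_prod_of_subset _ _ _ (Finset.Icc_subset_Icc_right h))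

lemma prod_pow_le_of_mem {κ : Type*} {t : Finset κ} {k : κ} (hk : k ∈ t) (p : κ → Ideal R)
    {ν : κ → ℕ} (hν : ν k ≠ 0) : ∏ k ∈ t, p k ^ ν k ≤ p k :=
  Ideal.le_of_dvd ((dvd_pow_self _ hν).trans (Finset.dvd_prod_of_mem (fun k => p k ^ ν k) hk))

lemma isMaximal_of_isPrime_of_le {P Q : Ideal R} [Finite (R ⧸ Q)] (hP : P.IsPrime) (h : Q ≤ P) :
    P.IsMaximal := by
  have : Finite (R ⧸ P) := Finite.of_surjective _ (Ideal.Quotient.factor_surjective h)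
  exact Ideal.Quotient.maximal_of_isField _ (Finite.isField_of_domain (R ⧸ P))

lemma prod_pow_le_of_subset {κ : Type*} {s t : Finset κ} (hst : s ⊆ t) {p : κ → Ideal R}
    {ν : κ → ℕ} {I : Ideal R} (hI : ∏ k ∈ t, p k ^ ν k ≤ I)
    (hmax : ∀ k ∈ t, k ∉ s → (p k).IsMaximal) (hnot : ∀ k ∈ t, k ∉ s → ¬ I ≤ p k) :
    ∏ k ∈ s, p k ^ ν k ≤ I := by
  set A := ∏ k ∈ s, p k ^ ν k
  set C := ∏ k ∈ t \ s, p k ^ ν k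
  have hcop : I ⊔ C = ⊤ := Ideal.sup_prod_eq_top fun k hk => Ideal.sup_pow_eq_top <| by
    obtain ⟨hkt, hks⟩ := Finset.mem_sdiff.1 hk
    rw [sup_comm]
    exact (hmax k hkt hks).out.2 _ (left_lt_sup.2 (hnot k hkt hks))
  calc A = A * I ⊔ A * C := by rw [← Ideal.mul_sup, hcop, Ideal.mul_top]
    _ ≤ I := sup_le Ideal.mul_le_right (by rwa [mul_comm, Finset.prod_sdiff hst])

lemma exists_eq_of_prod_pow_le {κ : Type*} {t : Finset κ} {p : κ → Ideal R} {ν : κ → ℕ}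
    {q : Ideal R} (hq : q.IsPrime) (hmax : ∀ k ∈ t, (p k).IsMaximal)
    (h : ∏ k ∈ t, p k ^ ν k ≤ q) : ∃ k ∈ t, p k = q := by
  obtain ⟨k, hk, hkq⟩ := hq.prod_le.1 h
  exact ⟨k, hk, (hmax k hk).eq_of_le hq.ne_top (Ideal.IsPrime.le_of_pow_le hkq)⟩

lemma IsDominantPrime.prod_Icc_pow_le {κ β : Type*} [LinearOrder κ] [LocallyFiniteOrder κ]
    [Preorder β] {N : Ideal R → β} {a b j : κ} {p : κ → Ideal R} {ν : κ → ℕ} {I : Ideal R}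
    (hIp : IsDominantPrime N I (p j)) (hj : j ∈ Finset.Icc a b)
    (hmax : ∀ k ∈ Finset.Icc a b, (p k).IsMaximal)
    (hinj : ∀ k ∈ Finset.Icc a b, ∀ k' ∈ Finset.Icc a b, p k = p k' → k = k')
    (hmono : ∀ k ∈ Finset.Icc a b, ∀ k' ∈ Finset.Icc a b, k ≤ k' → N (p k) ≤ N (p k'))
    (hI : ∏ k ∈ Finset.Icc a b, p k ^ ν k ≤ I) :
    ∏ k ∈ Finset.Icc a j, p k ^ ν k ≤ I := by
  refine prod_pow_le_of_subset (Finset.Icc_subset_Icc_right (Finset.mem_Icc.1 hj).2) hI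
    (fun k hk _ => hmax k hk) fun k hkt hks hIk => ?_
  have hjk : j < k := lt_of_not_ge fun hkj => hks (Finset.mem_Icc.2 ⟨(Finset.mem_Icc.1 hkt).1, hkj⟩)
  have hne : p k ≠ p j := fun h => hjk.ne' (hinj k hkt j hj h)
  exact (hmono j hj k hkt hjk.le).not_gt (hIp.2.2 (p k) (hmax k hkt).isPrime hIk hne)

end Ideals

lemma isPmin_iff {K : Type*} [Field K] [NumberField K] {I q : Ideal (𝓞 K)} :
    IsPmin I q ↔ IsDominantPrime Ideal.absNorm I q := by
  simp only [IsPmin, IsDominantPrime, Ideal.dvd_iff_le]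

theorem distortion_method_number_field_general
    {R ι β : Type*} [CommRing R] [Preorder β] (N : Ideal R → β)
    (a : ι → R) (Idl : ι → Ideal R)
    (hdom : ∀ i, ∃ q, IsDominantPrime N (Idl i) q)
    (Q : Ideal R) (hQ : ∀ i, Q ≤ Idl i)
    (J : ℕ) (p : ℕ → Ideal R) (ν : ℕ → ℕ)
    (hp : ∀ j ∈ Finset.Icc 1 J, (p j).IsPrime)
    (hν : ∀ j ∈ Finset.Icc 1 J, 1 ≤ ν j)
    (hpinj : ∀ j ∈ Finset.Icc 1 J, ∀ j' ∈ Finset.Icc 1 J, p j = p j' → j = j')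
    (hfact : Q = ∏ j ∈ Finset.Icc 1 J, p j ^ ν j)
    (hpmono : ∀ j ∈ Finset.Icc 1 J, ∀ j' ∈ Finset.Icc 1 J, j ≤ j' → N (p j) ≤ N (p j'))
    (Qp : ℕ → Ideal R) (hQp : ∀ j, Qp j = ∏ i ∈ Finset.Icc 1 j, p i ^ ν i)
    [Fintype (R ⧸ Q)]
    (B : ℕ → Finset (R ⧸ Q))
    (hB : ∀ j ∈ Finset.Icc 1 J, ∀ x, x ∈ B j ↔
      ∃ i, IsDominantPrime N (Idl i) (p j) ∧
        x - Ideal.Quotient.mk Q (a i) ∈ (Idl i).map (Ideal.Quotient.mk Q))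
    (α : ℕ → (R ⧸ Q) → ℝ)
    (hα : ∀ j ∈ Finset.Icc 1 J, ∀ x, α j x = fibreDensity (congrMod Q (Qp (j - 1))) (B j) x)
    (δ : ℕ → ℝ) (hδ : ∀ j ∈ Finset.Icc 1 J, δ j ∈ Set.Ico (0 : ℝ) 1)
    (P : ℕ → (R ⧸ Q) → ℝ)
    (hP0 : ∀ x, P 0 x = 1 / (Fintype.card (R ⧸ Q) : ℝ))
    (hPrec : ∀ j ∈ Finset.Icc 1 J, ∀ x, P j x = distort (α j) (B j) (δ j) (P (j - 1)) x)
    (hsum : ∑ j ∈ Finset.Icc 1 J, momentBound (α j) (δ j) (P (j - 1)) < 1) :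
    ¬ ∀ x : R, ∃ i, x - a i ∈ Idl i := by
  obtain rfl : Qp = fun j => ∏ i ∈ Finset.Icc 1 j, p i ^ ν i := funext hQp
  have hmem : ∀ j < J, j + 1 ∈ Finset.Icc 1 J := fun j hj => Finset.mem_Icc.2 (by omega)
  have hmax : ∀ j ∈ Finset.Icc 1 J, (p j).IsMaximal := fun j hj =>
    isMaximal_of_isPrime_of_le (hp j hj)
      (hfact.trans_le (prod_pow_le_of_mem hj p (Nat.one_le_iff_ne_zero.1 (hν j hj))))
  have hα' : ∀ j < J, α (j + 1) = fibreDensity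
      (congrMod Q (∏ i ∈ Finset.Icc 1 j, p i ^ ν i)) (B (j + 1)) :=
    fun j hj => funext (hα (j + 1) (hmem j hj))
  have hprocess : IsDistortionProcess J (fun j => congrMod Q (∏ i ∈ Finset.Icc 1 j, p i ^ ν i))
      (fun j => B (j + 1)) (fun j => δ (j + 1)) P :=
    { antitone := (congrMod_mono Q).comp_antitone (antitone_prod_Icc 1 _)
      le_ker_mem := fun j hj => by
        simp only [hB _ (hmem j hj)]
        exact congrMod_le_ker_exists_sub_mem (fun i hi =>
          hi.prod_Icc_pow_le (hmem j hj) hmax hpinj hpmono (hfact.symm.trans_le (hQ i))) _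
      threshold_mem := fun j hj => hδ _ (hmem j hj)
      le_ker_zero := fun x y _ => (hP0 x).trans (hP0 y).symm
      zero_nonneg := fun x => by rw [hP0]; positivity
      succ := fun j hj => by rw [← hα' j hj]; exact funext (hPrec _ (hmem j hj)) }
  obtain ⟨x, hx⟩ := hprocess.exists_forall_notMem <|
    calc _ = ∑ j ∈ Finset.range J, momentBound (α (j + 1)) (δ (j + 1)) (P j) :=
          Finset.sum_congr rfl fun j hj => by rw [hα' j (Finset.mem_range.1 hj)]
      _ = ∑ j ∈ Finset.Icc 1 J, momentBound (α j) (δ j) (P (j - 1)) := by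
          rw [Finset.range_eq_Ico]
          exact Finset.sum_Ico_add' (fun j => momentBound (α j) (δ j) (P (j - 1))) 0 J 1
      _ < 1 := hsum
      _ = ∑ x, P 0 x := by simp [hP0]
  obtain ⟨z, rfl⟩ := Ideal.Quotient.mk_surjective x
  intro hcover
  obtain ⟨i, hi⟩ := hcover z
  obtain ⟨q, hq⟩ := hdom i
  obtain ⟨j, hj, rfl⟩ := exists_eq_of_prod_pow_le hq.1 hmax
    (hfact.symm.trans_le ((hQ i).trans hq.2.1))
  obtain ⟨j, rfl⟩ := Nat.exists_eq_add_of_le' (Finset.mem_Icc.1 hj).1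
  refine hx j (Finset.mem_Icc.1 hj).2 ((hB _ hj _).2 ⟨i, hq, ?_⟩)
  rw [← map_sub]
  exact Ideal.mem_map_of_mem _ hi

/-- The distortion method for number fields: if the moment sum is less than 1, the
collection does not cover the ring of integers. -/
theorem distortion_method_number_field
    {K : Type*} [Field K] [NumberField K]
    (n : ℕ) (hn : 0 < n)
    (a : Fin n → 𝓞 K) (Idl : Fin n → Ideal (𝓞 K))
    (hdist : ∀ i : Fin n, Distinguishable (Idl i))
    (hmono : ∀ i j : Fin n, i ≤ j → Ideal.absNorm (Idl i) ≤ Ideal.absNorm (Idl j))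
    (s : ℕ)
    (hsle : ∀ I₀ : Ideal (𝓞 K), (Finset.univ.filter fun i : Fin n => Idl i = I₀).card ≤ s)
    (hseq : ∃ I₀ : Ideal (𝓞 K), (Finset.univ.filter fun i : Fin n => Idl i = I₀).card = s)
    (Q : Ideal (𝓞 K)) (hQ : Q = ⨅ i : Fin n, Idl i)
    (J : ℕ) (p : ℕ → Ideal (𝓞 K)) (ν : ℕ → ℕ)
    (hp : ∀ j ∈ Finset.Icc 1 J, (p j).IsPrime)
    (hν : ∀ j ∈ Finset.Icc 1 J, 1 ≤ ν j)
    (hpinj : ∀ j ∈ Finset.Icc 1 J, ∀ j' ∈ Finset.Icc 1 J, p j = p j' → j = j')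
    (hfact : Q = ∏ j ∈ Finset.Icc 1 J, p j ^ ν j)
    (hpmono : ∀ j ∈ Finset.Icc 1 J, ∀ j' ∈ Finset.Icc 1 J, j ≤ j' →
      Ideal.absNorm (p j) ≤ Ideal.absNorm (p j'))
    (Qp : ℕ → Ideal (𝓞 K)) (hQp : ∀ j : ℕ, Qp j = ∏ i ∈ Finset.Icc 1 j, p i ^ ν i)
    [Fintype (𝓞 K ⧸ Q)]
    (B : ℕ → Finset (𝓞 K ⧸ Q))
    (hB : ∀ j ∈ Finset.Icc 1 J, B j = Finset.univ.filter fun x : 𝓞 K ⧸ Q =>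
      ∃ i : Fin n, IsPmin (Idl i) (p j) ∧
        x - Ideal.Quotient.mk Q (a i) ∈ (Idl i).map (Ideal.Quotient.mk Q))
    (F : ℕ → (𝓞 K ⧸ Q) → Finset (𝓞 K ⧸ Q))
    (hF : ∀ (j : ℕ) (x : 𝓞 K ⧸ Q),
      F j x = Finset.univ.filter fun x' : 𝓞 K ⧸ Q => x' - x ∈ (Qp j).map (Ideal.Quotient.mk Q))
    (α : ℕ → (𝓞 K ⧸ Q) → ℝ)
    (hα : ∀ j ∈ Finset.Icc 1 J, ∀ x : 𝓞 K ⧸ Q,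
      α j x = ((F (j - 1) x ∩ B j).card : ℝ) / ((F (j - 1) x).card : ℝ))
    (δ : ℕ → ℝ) (hδ : ∀ j ∈ Finset.Icc 1 J, δ j ∈ Set.Icc (0 : ℝ) (1 / 2))
    (P : ℕ → (𝓞 K ⧸ Q) → ℝ)
    (hP0 : ∀ x : 𝓞 K ⧸ Q, P 0 x = 1 / (Fintype.card (𝓞 K ⧸ Q) : ℝ))
    (hPrec : ∀ j ∈ Finset.Icc 1 J, ∀ x : 𝓞 K ⧸ Q,
      P j x = if α j x < δ j then (if x ∈ B j then 0 else P (j - 1) x / (1 - α j x))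
        else if α j x = 0 then P (j - 1) x
        else P (j - 1) x * (α j x - (if x ∈ B j then δ j else 0)) / (α j x * (1 - δ j)))
    (hsum : ∑ j ∈ Finset.Icc 1 J,
        (if δ j = 0 then ∑ x : 𝓞 K ⧸ Q, α j x * P (j - 1) x
         else min (∑ x : 𝓞 K ⧸ Q, α j x * P (j - 1) x)
           ((∑ x : 𝓞 K ⧸ Q, (α j x) ^ 2 * P (j - 1) x) / (4 * δ j * (1 - δ j)))) < 1) :
    ¬ (∀ x : 𝓞 K, ∃ i : Fin n, x - a i ∈ Idl i) := by
  refine distortion_method_number_field_general Ideal.absNorm a Idl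
    (fun i => (hdist i).2.2.imp fun _ => isPmin_iff.1) Q (fun i => hQ.trans_le (iInf_le Idl i))
    J p ν hp hν hpinj hfact hpmono Qp hQp B (fun j hj x => ?_) α
    (fun j hj x => ?_) δ (fun j hj => ⟨(hδ j hj).1, (hδ j hj).2.trans_lt (by norm_num)⟩)
    P hP0 hPrec hsum
  · simp only [hB j hj, Finset.mem_filter_univ, isPmin_iff]
  · simp only [hα j hj x, hF, fibreDensity, fibre, congrMod_iff]
end

section
/- Assume the number-field distortion setup. Then for every x ∈ O_K/Q and every 1 ≤ j ≤ J, α_j(x) ≤ Σ_{r=1}^{ν_j} Σ_{H | Q_{j−1}} Σ_{1 ≤ i ≤ n, I_i = H·p_j^r} 1_{x ⊆ a_i + I_i·? } / N(p_j)^r, where the middle sum is over ideals H of O_K dividing Q_{j−1}, the inner sum is over indices i with I_i = H·p_j^r, and the indicator 1_{x ⊆ a_i + H} equals 1 exactly when the coset x of Q is contained in the congruence class a_i + H; that is, α_j(x) ≤ Σ_{r=1}^{ν_j} Σ_{H | Q_{j−1}} Σ_{i : I_i = H p_j^r} 1_{x ⊆ a_i + H} / N(p_j)^r. -/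
/-!
Write `Q = M * P ^ v * T` with `P = p_j` and `M = Q_{j-1}`. A modulus `I` dividing `Q`, divisible by
`P` and coprime to `T` is `H * P ^ r` with `H ∣ M` and `1 ≤ r ≤ v`. If a point of the fibre `x + M`
lies in `b + I`, then `x ∈ b + H`, because `M` and `I` are both contained in `H`. Since `M` and
`P ^ r` are coprime, the larger class `b + P ^ r` occupies exactly the proportion `1 / N(P) ^ r` of
the fibre. The union bound over all triples `(r, H, i)` with `I_i = H * P ^ r` finishes the proof.
-/

set_option maxHeartbeats 1000000
set_option synthInstance.maxHeartbeats 1000000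

open scoped Classical
open NumberField

section ResidueClass

variable {A : Type*} [CommRing A] [Fintype A]

/-- The residue class `b + I` of an ideal `I` in a finite ring, as a finset. Both the fibres of
`O_K/Q → O_K/Q_{j-1}` and the congruence classes `a_i + I_i` are of this form in `O_K/Q`. -/
noncomputable def residueClass (I : Ideal A) (b : A) : Finset A :=
  Finset.univ.filter fun y => y - b ∈ I

@[simp]
lemma mem_residueClass {I : Ideal A} {b y : A} : y ∈ residueClass I b ↔ y - b ∈ I := by
  simp [residueClass]

lemma residueClass_nonempty (I : Ideal A) (b : A) : (residueClass I b).Nonempty :=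
  ⟨b, by simp⟩

lemma residueClass_eq_of_mem {I : Ideal A} {b z : A} (hz : z ∈ residueClass I b) :
    residueClass I b = residueClass I z := by
  ext y
  rw [mem_residueClass, mem_residueClass, ← I.sub_mem_iff_left (mem_residueClass.mp hz),
    sub_sub_sub_cancel_right]

lemma residueClass_inter_residueClass_self (I L : Ideal A) (z : A) :
    residueClass I z ∩ residueClass L z = residueClass (I ⊓ L) z := by
  ext y
  simp

lemma residueClass_mono {I L : Ideal A} (h : I ≤ L) (b : A) :
    residueClass I b ⊆ residueClass L b :=
  fun _ hy => mem_residueClass.mpr (h (mem_residueClass.mp hy))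

lemma mem_residueClass_of_inter_nonempty {M I H : Ideal A} (hM : M ≤ H) (hI : I ≤ H) {x b : A}
    (h : (residueClass M x ∩ residueClass I b).Nonempty) : x ∈ residueClass H b := by
  obtain ⟨y, hy⟩ := h
  obtain ⟨hyM, hyI⟩ := Finset.mem_inter.mp hy
  rw [residueClass_eq_of_mem (residueClass_mono hI b hyI),
    ← residueClass_eq_of_mem (residueClass_mono hM x hyM)]
  simp

lemma cardQuot_mul_card_residueClass (I : Ideal A) (b : A) :
    I.cardQuot * (residueClass I b).card = Fintype.card A := by
  have translate : Nat.card (residueClass I b) = Nat.card I :=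
    Nat.card_congr ((Equiv.subRight b).subtypeEquiv fun _ => mem_residueClass)
  rw [← Nat.card_eq_finsetCard, translate, Submodule.cardQuot_apply, ← Nat.card_eq_fintype_card,
    Submodule.card_eq_card_quotient_mul_card I, mul_comm]

lemma cardQuot_mul_card_inter_residueClass_le {M L : Ideal A} (hML : IsCoprime M L) (x b : A) :
    L.cardQuot * (residueClass M x ∩ residueClass L b).card ≤ (residueClass M x).card := by
  obtain hempty | ⟨z, hz⟩ := (residueClass M x ∩ residueClass L b).eq_empty_or_nonempty
  · simp [hempty]
  obtain ⟨hzM, hzL⟩ := Finset.mem_inter.mp hz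
  have hMpos : 0 < M.cardQuot := Nat.card_pos
  rw [residueClass_eq_of_mem hzM, residueClass_eq_of_mem hzL, residueClass_inter_residueClass_self]
  refine (Nat.eq_of_mul_eq_mul_left hMpos ?_).le
  rw [← mul_assoc, ← cardQuot_mul_of_coprime hML, Ideal.mul_eq_inf_of_isCoprime hML,
    cardQuot_mul_card_residueClass, cardQuot_mul_card_residueClass]

/-- The proportion of the residue class `x + M` that lies in `B`. For `M` the image of `Q_{j-1}` in
`O_K/Q` and `B = 𝓑_j` this is `α_j(x)`. -/
noncomputable def residueDensity (M : Ideal A) (x : A) (B : Finset A) : ℝ :=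
  (residueClass M x ∩ B).card / (residueClass M x).card

lemma residueDensity_mono (M : Ideal A) (x : A) : Monotone (residueDensity M x) := fun B C h => by
  unfold residueDensity
  gcongr

lemma residueDensity_biUnion_le {κ : Type*} (M : Ideal A) (x : A) (s : Finset κ)
    (C : κ → Finset A) :
    residueDensity M x (s.biUnion C) ≤ ∑ k ∈ s, residueDensity M x (C k) := by
  simp only [residueDensity, ← Finset.sum_div, Finset.inter_biUnion]
  gcongr
  exact_mod_cast Finset.card_biUnion_le

lemma residueDensity_residueClass_le_of_isCoprime {M L : Ideal A} (hML : IsCoprime M L) (x b : A) :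
    residueDensity M x (residueClass L b) ≤ 1 / L.cardQuot := by
  have hF : (0 : ℝ) < (residueClass M x).card := by
    exact_mod_cast (residueClass_nonempty M x).card_pos
  have hL : (0 : ℝ) < L.cardQuot := by exact_mod_cast (Nat.card_pos : 0 < Nat.card (A ⧸ L))
  rw [residueDensity, div_le_div_iff₀ hF hL, one_mul, mul_comm]
  exact_mod_cast cardQuot_mul_card_inter_residueClass_le hML x b

lemma residueDensity_residueClass_eq_zero_of_notMem {M I H : Ideal A} (hM : M ≤ H) (hI : I ≤ H)
    {x b : A} (hx : x ∉ residueClass H b) : residueDensity M x (residueClass I b) = 0 := by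
  have hempty : residueClass M x ∩ residueClass I b = ∅ := by
    contrapose! hx
    exact mem_residueClass_of_inter_nonempty hM hI hx
  simp [residueDensity, hempty]

end ResidueClass

lemma cardQuot_map_mk {R : Type*} [CommRing R] {Q I : Ideal R} (h : Q ≤ I) :
    (I.map (Ideal.Quotient.mk Q)).cardQuot = I.cardQuot :=
  Nat.card_congr (DoubleQuot.quotQuotEquivQuotOfLE h).toEquiv

lemma exists_eq_mul_prime_pow_of_dvd {α : Type*} [CommSemiring α] [IsCancelMulZero α]
    [DecompositionMonoid α] {I M P T : α} {v : ℕ} (hP : Prime P) (hMP : IsCoprime M P)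
    (hPI : P ∣ I) (hIT : IsCoprime I T) (hdvd : I ∣ M * P ^ v * T) :
    ∃ r ∈ Finset.Icc 1 v, ∃ H, H ∣ M ∧ I = H * P ^ r := by
  obtain ⟨H, D, hHM, hDP, rfl⟩ :=
    exists_dvd_and_dvd_of_dvd_mul (hIT.dvd_of_dvd_mul_right hdvd)
  obtain ⟨r, hrv, u, hu⟩ := (dvd_prime_pow hP v).mp hDP
  have hHP : ¬ P ∣ H := fun h =>
    hP.not_isUnit (hMP.isUnit_of_dvd' (h.trans hHM) dvd_rfl)
  have hr : r ≠ 0 := by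
    rintro rfl
    have hD : IsUnit D := .of_mul_eq_one _ (hu.trans (pow_zero P))
    exact hHP ((hP.dvd_or_dvd hPI).resolve_right fun h => hP.not_isUnit (isUnit_of_dvd_unit h hD))
  refine ⟨r, Finset.mem_Icc.mpr ⟨Nat.one_le_iff_ne_zero.mpr hr, hrv⟩, H * ↑u⁻¹, ?_, ?_⟩
  · exact (Units.mul_right_dvd).mpr hHM
  · rw [← hu, mul_assoc, mul_comm D, Units.inv_mul_cancel_left]

lemma prod_Icc_eq_prod_mul_mul_prod {α : Type*} [CommMonoid α] (f : ℕ → α) {j J : ℕ}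
    (hj : j ∈ Finset.Icc 1 J) :
    ∏ k ∈ Finset.Icc 1 J, f k =
      (∏ k ∈ Finset.Icc 1 (j - 1), f k) * f j * ∏ k ∈ Finset.Ioc j J, f k := by
  obtain ⟨hj1, hjJ⟩ := Finset.mem_Icc.mp hj
  obtain ⟨m, rfl⟩ := Nat.exists_eq_add_of_le' hj1
  rw [Nat.add_sub_cancel, ← Finset.prod_Icc_succ_top (by omega)]
  exact (Finset.prod_Ioc_consecutive f (Nat.zero_le _) hjJ).symm

lemma ne_bot_of_finite_quotient {S : Type*} [CommRing S] [Infinite S] (I : Ideal S)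
    [Finite (S ⧸ I)] : I ≠ ⊥ := by
  rintro rfl
  have : Finite S := .of_equiv _ (RingEquiv.quotientBot S).toEquiv
  exact not_finite S

section Dedekind

variable {R : Type*} [CommRing R] [IsDedekindDomain R]

lemma isCoprime_of_prime_not_dvd {P I : Ideal R} (hP : Prime P) (h : ¬ P ∣ I) : IsCoprime P I :=
  Ideal.isCoprime_iff_gcd.mpr (hP.irreducible.gcd_eq_one_iff.mpr h)

lemma isCoprime_of_prime_of_ne {P P' : Ideal R} (hP : Prime P) (hP' : Prime P') (hne : P ≠ P') :
    IsCoprime P P' :=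
  isCoprime_of_prime_not_dvd hP fun h =>
    hne (associated_iff_eq.mp ((hP.dvd_prime_iff_associated hP').mp h))

lemma prime_of_prod_pow_ne_bot {κ : Type*} {s : Finset κ} {p : κ → Ideal R} {ν : κ → ℕ}
    (h : ∏ k ∈ s, p k ^ ν k ≠ ⊥) (hp : ∀ k ∈ s, (p k).IsPrime) (hν : ∀ k ∈ s, 1 ≤ ν k) {k : κ}
    (hk : k ∈ s) : Prime (p k) := by
  have hdvd : p k ∣ ∏ k ∈ s, p k ^ ν k :=
    (dvd_pow_self _ (Nat.one_le_iff_ne_zero.mp (hν k hk))).trans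
      (Finset.dvd_prod_of_mem (fun k => p k ^ ν k) hk)
  exact Ideal.prime_of_isPrime (ne_zero_of_dvd_ne_zero h hdvd) (hp k hk)

lemma finite_setOf_dvd {M : Ideal R} (hM : M ≠ 0) : {H : Ideal R | H ∣ M}.Finite :=
  have := UniqueFactorizationMonoid.fintypeSubtypeDvd M hM
  Set.finite_coe_iff.mp (Finite.of_fintype {H : Ideal R // H ∣ M})

variable {Q M H P : Ideal R} [Fintype (R ⧸ Q)]

lemma residueDensity_residueClass_mul_pow_le (hP : Prime P) (hMP : IsCoprime M P) (hMH : M ≤ H)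
    {r : ℕ} (hQ : Q ≤ P ^ r) (x b : R ⧸ Q) :
    residueDensity (M.map (Ideal.Quotient.mk Q)) x
        (residueClass ((H * P ^ r).map (Ideal.Quotient.mk Q)) b) ≤
      if x - b ∈ H.map (Ideal.Quotient.mk Q) then 1 / (P.cardQuot : ℝ) ^ r else 0 := by
  have hprime : P.IsPrime := Ideal.isPrime_of_prime hP
  split_ifs with hx
  · have hcop : IsCoprime (M.map (Ideal.Quotient.mk Q)) ((P ^ r).map (Ideal.Quotient.mk Q)) :=
      hMP.pow_right.map (Ideal.mapHom (Ideal.Quotient.mk Q))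
    have hnorm : ((P ^ r).map (Ideal.Quotient.mk Q)).cardQuot = P.cardQuot ^ r := by
      rw [cardQuot_map_mk hQ, cardQuot_pow_of_prime hP.ne_zero]
    calc _ ≤ residueDensity (M.map (Ideal.Quotient.mk Q)) x
          (residueClass ((P ^ r).map (Ideal.Quotient.mk Q)) b) :=
          residueDensity_mono _ x (residueClass_mono (Ideal.map_mono Ideal.mul_le_right) b)
      _ ≤ _ := residueDensity_residueClass_le_of_isCoprime hcop x b
      _ = _ := by rw [hnorm, Nat.cast_pow]
  · exact (residueDensity_residueClass_eq_zero_of_notMem (Ideal.map_mono hMH)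
      (Ideal.map_mono Ideal.mul_le_left) (mt mem_residueClass.mp hx)).le

variable {ι : Type*} [Fintype ι] {I : ι → Ideal R} {b : ι → R ⧸ Q} {B : Finset (R ⧸ Q)}

lemma residueDensity_le_sum_of_forall_exists_eq_mul_pow {v : ℕ} (hP : Prime P)
    (hMP : IsCoprime M P) (hQ : Q ≤ P ^ v) {D : Finset (Ideal R)} (hD : ∀ H ∈ D, H ∣ M)
    (hB : ∀ y ∈ B, ∃ i, (∃ r ∈ Finset.Icc 1 v, ∃ H ∈ D, I i = H * P ^ r) ∧
      y - b i ∈ (I i).map (Ideal.Quotient.mk Q)) (x : R ⧸ Q) :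
    residueDensity (M.map (Ideal.Quotient.mk Q)) x B ≤
      ∑ r ∈ Finset.Icc 1 v, ∑ H ∈ D, ∑ i,
        if I i = H * P ^ r ∧ x - b i ∈ H.map (Ideal.Quotient.mk Q)
        then 1 / (P.cardQuot : ℝ) ^ r else 0 := by
  let C : ι → Finset (R ⧸ Q) := fun i => residueClass ((I i).map (Ideal.Quotient.mk Q)) (b i)
  let S : ℕ → Ideal R → Finset ι := fun r H => {i | I i = H * P ^ r}
  have hcover : B ⊆ (Finset.Icc 1 v).biUnion fun r => D.biUnion fun H => (S r H).biUnion C := by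
    intro y hy
    obtain ⟨i, ⟨r, hr, H, hH, hI⟩, hyi⟩ := hB y hy
    simp only [Finset.mem_biUnion]
    exact ⟨r, hr, H, hH, i, by simpa [S] using hI, mem_residueClass.mpr hyi⟩
  calc residueDensity (M.map (Ideal.Quotient.mk Q)) x B
      ≤ _ := residueDensity_mono _ x hcover
    _ ≤ ∑ r ∈ Finset.Icc 1 v, ∑ H ∈ D, ∑ i ∈ S r H,
          residueDensity (M.map (Ideal.Quotient.mk Q)) x (C i) :=
        (residueDensity_biUnion_le _ x _ _).trans <| Finset.sum_le_sum fun r _ =>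
          (residueDensity_biUnion_le _ x _ _).trans <| Finset.sum_le_sum fun H _ =>
            residueDensity_biUnion_le _ x _ _
    _ ≤ ∑ r ∈ Finset.Icc 1 v, ∑ H ∈ D, ∑ i ∈ S r H,
          if x - b i ∈ H.map (Ideal.Quotient.mk Q) then 1 / (P.cardQuot : ℝ) ^ r else 0 := by
        refine Finset.sum_le_sum fun r hr => Finset.sum_le_sum fun H hH =>
          Finset.sum_le_sum fun i hi => ?_
        have hQr : Q ≤ P ^ r := hQ.trans (Ideal.pow_le_pow_right (Finset.mem_Icc.mp hr).2)
        have hI : I i = H * P ^ r := by simpa [S] using hi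
        simp only [C, hI]
        exact residueDensity_residueClass_mul_pow_le hP hMP (Ideal.le_of_dvd (hD H hH)) hQr x (b i)
    _ = _ := by simp only [S, Finset.sum_filter, ← ite_and]

theorem residueDensity_le_sum_of_eq_mul_pow_mul {T : Ideal R} {v : ℕ} (hP : Prime P)
    (hMP : IsCoprime M P) (hQ : Q = M * P ^ v * T) (hQI : ∀ i, Q ≤ I i)
    (hB : ∀ y ∈ B, ∃ i, (P ∣ I i ∧ IsCoprime (I i) T) ∧
      y - b i ∈ (I i).map (Ideal.Quotient.mk Q)) (x : R ⧸ Q) :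
    residueDensity (M.map (Ideal.Quotient.mk Q)) x B ≤
      ∑ r ∈ Finset.Icc 1 v, ∑' H : Ideal R,
        if H ∣ M then
          ∑ i, if I i = H * P ^ r ∧ x - b i ∈ H.map (Ideal.Quotient.mk Q)
            then 1 / (P.cardQuot : ℝ) ^ r else 0
        else 0 := by
  have hM : M ≠ 0 := by
    rintro rfl
    exact hP.not_isUnit (isCoprime_zero_left.mp hMP)
  have hfin := finite_setOf_dvd hM
  have hQP : Q ≤ P ^ v := hQ ▸ Ideal.mul_le_left.trans Ideal.mul_le_right
  have hfactor : ∀ i, P ∣ I i ∧ IsCoprime (I i) T →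
      ∃ r ∈ Finset.Icc 1 v, ∃ H ∈ hfin.toFinset, I i = H * P ^ r := fun i hi => by
    simpa only [hfin.mem_toFinset, Set.mem_ofPred_eq] using
      exists_eq_mul_prime_pow_of_dvd hP hMP hi.1 hi.2 (hQ ▸ Ideal.dvd_iff_le.mpr (hQI i))
  have hdivisors : ∀ f : Ideal R → ℝ,
      ∑ H ∈ hfin.toFinset, f H = ∑' H, if H ∣ M then f H else 0 := fun f => by
    rw [sum_eq_tsum_indicator]
    simp only [Set.indicator_apply, hfin.coe_toFinset, Set.mem_ofPred_eq]
  have hB' : ∀ y ∈ B, ∃ i, (∃ r ∈ Finset.Icc 1 v, ∃ H ∈ hfin.toFinset, I i = H * P ^ r) ∧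
      y - b i ∈ (I i).map (Ideal.Quotient.mk Q) := fun y hy =>
    (hB y hy).imp fun i => And.imp_left (hfactor i)
  exact (residueDensity_le_sum_of_forall_exists_eq_mul_pow hP hMP hQP (by simp) hB' x).trans_eq
    (Finset.sum_congr rfl fun r _ => hdivisors _)

theorem alpha_upper_bound_general (hQI : ∀ i, Q ≤ I i)
    {J : ℕ} {p : ℕ → Ideal R} {ν : ℕ → ℕ} (hp : ∀ k ∈ Finset.Icc 1 J, Prime (p k))
    (hpinj : Set.InjOn p (Finset.Icc 1 J)) (hfact : Q = ∏ k ∈ Finset.Icc 1 J, p k ^ ν k)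
    {j : ℕ} (hj : j ∈ Finset.Icc 1 J) (hM : M = ∏ k ∈ Finset.Icc 1 (j - 1), p k ^ ν k)
    (hB : ∀ y ∈ B, ∃ i, (p j ∣ I i ∧ ∀ k ∈ Finset.Ioc j J, ¬ p k ∣ I i) ∧
      y - b i ∈ (I i).map (Ideal.Quotient.mk Q)) (x : R ⧸ Q) :
    residueDensity (M.map (Ideal.Quotient.mk Q)) x B ≤
      ∑ r ∈ Finset.Icc 1 (ν j), ∑' H : Ideal R,
        if H ∣ M then
          ∑ i, if I i = H * p j ^ r ∧ x - b i ∈ H.map (Ideal.Quotient.mk Q)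
            then 1 / ((p j).cardQuot : ℝ) ^ r else 0
        else 0 := by
  have hQ : Q = M * p j ^ ν j * ∏ k ∈ Finset.Ioc j J, p k ^ ν k := by
    rw [hfact, hM, prod_Icc_eq_prod_mul_mul_prod _ hj]
  have hbelow : ∀ k ∈ Finset.Icc 1 (j - 1), k ∈ Finset.Icc 1 J ∧ k ≠ j := by
    grind
  have habove : ∀ k ∈ Finset.Ioc j J, k ∈ Finset.Icc 1 J := by
    grind
  have hMP : IsCoprime M (p j) := hM ▸ IsCoprime.prod_left fun k hk =>
    have ⟨hkJ, hkj⟩ := hbelow k hk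
    (isCoprime_of_prime_of_ne (hp k hkJ) (hp j hj) (hpinj.ne hkJ hj hkj)).pow_left
  refine residueDensity_le_sum_of_eq_mul_pow_mul (hp j hj) hMP hQ hQI (fun y hy => ?_) x
  obtain ⟨i, ⟨hdvd, hlast⟩, hyi⟩ := hB y hy
  refine ⟨i, ⟨hdvd, IsCoprime.prod_right fun k hk => ?_⟩, hyi⟩
  exact (isCoprime_of_prime_not_dvd (hp k (habove k hk)) (hlast k hk)).symm.pow_right

end Dedekind

lemma IsPmin.not_dvd_of_absNorm_le {K : Type*} [Field K] [NumberField K] {I p q : Ideal (𝓞 K)}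
    (h : IsPmin I p) (hq : q.IsPrime) (hne : q ≠ p) (hle : Ideal.absNorm p ≤ Ideal.absNorm q) :
    ¬ q ∣ I :=
  fun hqI => (h.2.2 q hq hqI hne).not_ge hle

lemma IsPmin.forall_mem_Ioc_not_dvd {K : Type*} [Field K] [NumberField K] {I : Ideal (𝓞 K)}
    {p : ℕ → Ideal (𝓞 K)} {j J : ℕ} (h : IsPmin I (p j)) (hj : j ∈ Finset.Icc 1 J)
    (hp : ∀ k ∈ Finset.Icc 1 J, (p k).IsPrime) (hpinj : Set.InjOn p (Finset.Icc 1 J))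
    (hpmono : MonotoneOn (fun k => Ideal.absNorm (p k)) (Finset.Icc 1 J)) :
    ∀ k ∈ Finset.Ioc j J, ¬ p k ∣ I := by
  intro k hk
  have hjk : j < k := (Finset.mem_Ioc.mp hk).1
  have hkJ : k ∈ Finset.Icc 1 J := by grind
  exact h.not_dvd_of_absNorm_le (hp k hkJ) (hpinj.ne hkJ hj hjk.ne') (hpmono hj hkJ hjk.le)

/-- Upper bound for `α_j(x)` in terms of the congruence classes of the covering collection. -/
theorem alpha_upper_bound
    {K : Type*} [Field K] [NumberField K]
    (n : ℕ) (hn : 0 < n)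
    (a : Fin n → 𝓞 K) (Idl : Fin n → Ideal (𝓞 K))
    (hdist : ∀ i : Fin n, Distinguishable (Idl i))
    (hmono : ∀ i j : Fin n, i ≤ j → Ideal.absNorm (Idl i) ≤ Ideal.absNorm (Idl j))
    (s : ℕ)
    (hsle : ∀ I₀ : Ideal (𝓞 K), (Finset.univ.filter fun i : Fin n => Idl i = I₀).card ≤ s)
    (hseq : ∃ I₀ : Ideal (𝓞 K), (Finset.univ.filter fun i : Fin n => Idl i = I₀).card = s)
    (Q : Ideal (𝓞 K)) (hQ : Q = ⨅ i : Fin n, Idl i)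
    (J : ℕ) (p : ℕ → Ideal (𝓞 K)) (ν : ℕ → ℕ)
    (hp : ∀ j ∈ Finset.Icc 1 J, (p j).IsPrime)
    (hν : ∀ j ∈ Finset.Icc 1 J, 1 ≤ ν j)
    (hpinj : ∀ j ∈ Finset.Icc 1 J, ∀ j' ∈ Finset.Icc 1 J, p j = p j' → j = j')
    (hfact : Q = ∏ j ∈ Finset.Icc 1 J, p j ^ ν j)
    (hpmono : ∀ j ∈ Finset.Icc 1 J, ∀ j' ∈ Finset.Icc 1 J, j ≤ j' →
      Ideal.absNorm (p j) ≤ Ideal.absNorm (p j'))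
    (Qp : ℕ → Ideal (𝓞 K)) (hQp : ∀ j : ℕ, Qp j = ∏ i ∈ Finset.Icc 1 j, p i ^ ν i)
    [Fintype (𝓞 K ⧸ Q)]
    (B : ℕ → Finset (𝓞 K ⧸ Q))
    (hB : ∀ j ∈ Finset.Icc 1 J, B j = Finset.univ.filter fun x : 𝓞 K ⧸ Q =>
      ∃ i : Fin n, IsPmin (Idl i) (p j) ∧
        x - Ideal.Quotient.mk Q (a i) ∈ (Idl i).map (Ideal.Quotient.mk Q))
    (F : ℕ → (𝓞 K ⧸ Q) → Finset (𝓞 K ⧸ Q))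
    (hF : ∀ (j : ℕ) (x : 𝓞 K ⧸ Q),
      F j x = Finset.univ.filter fun x' : 𝓞 K ⧸ Q => x' - x ∈ (Qp j).map (Ideal.Quotient.mk Q))
    (α : ℕ → (𝓞 K ⧸ Q) → ℝ)
    (hα : ∀ j ∈ Finset.Icc 1 J, ∀ x : 𝓞 K ⧸ Q,
      α j x = ((F (j - 1) x ∩ B j).card : ℝ) / ((F (j - 1) x).card : ℝ))
    :
    ∀ j ∈ Finset.Icc 1 J, ∀ x : 𝓞 K ⧸ Q,
      α j x ≤ ∑ r ∈ Finset.Icc 1 (ν j), ∑' H : Ideal (𝓞 K),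
        (if H ∣ Qp (j - 1) then
          ∑ i : Fin n,
            (if Idl i = H * p j ^ r ∧
                x - Ideal.Quotient.mk Q (a i) ∈ H.map (Ideal.Quotient.mk Q)
             then 1 / (Ideal.absNorm (p j) : ℝ) ^ r else 0)
         else 0) := by
  intro j hj x
  have hQ0 : ∏ k ∈ Finset.Icc 1 J, p k ^ ν k ≠ ⊥ := hfact ▸ ne_bot_of_finite_quotient Q
  have hinj : Set.InjOn p (Finset.Icc 1 J) := fun k hk l hl => hpinj k hk l hl
  have hBj : ∀ y ∈ B j, ∃ i, (p j ∣ Idl i ∧ ∀ k ∈ Finset.Ioc j J, ¬ p k ∣ Idl i) ∧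
      y - Ideal.Quotient.mk Q (a i) ∈ (Idl i).map (Ideal.Quotient.mk Q) := fun y hy => by
    obtain ⟨i, hi, hyi⟩ := Finset.mem_filter_univ y |>.mp (hB j hj ▸ hy)
    have hlast := hi.forall_mem_Ioc_not_dvd hj hp hinj fun k hk l hl => hpmono k hk l hl
    exact ⟨i, ⟨hi.2.1, hlast⟩, hyi⟩
  rw [hα j hj, hF]
  exact alpha_upper_bound_general (fun i => hQ ▸ iInf_le Idl i)
    (fun k => prime_of_prod_pow_ne_bot hQ0 hp hν) hinj hfact hj (hQp (j - 1)) hBj x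
end
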